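/- arXiv:2405.03046 — 2 statements merged into one kernel-verified Lean document; each statement's English description precedes it below -/
import Mathlib

section
/- Endow ℝⁿ with the partial order induced by a closed cone C ⊆ ℝⁿ (that is, x ≤ y iff y − x ∈ C). Let T : ℝⁿ → ℝⁿ be a linear map with T C ⊆ C whose spectrum is {1} and all of whose Jordan blocks have size at most 2, i.e., (T − id)² = 0. Then T v ≥ v for every v ∈ ℝⁿ with v ≥ 0 (equivalently, T − id maps C into C). -/
/-!
Write `N = T - 1`. Since `N ^ 2 = 0`, the binomial expansion gives `T ^ k v = v + k • N v`, so
`N v` is the limit of the vectors `(1 / k) • T ^ k v`, which lie in `C`; closedness of `C` puts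
`N v` in `C`.
-/

/-- Endow `ℝⁿ` with the order induced by a closed cone `C`.
If `T` is linear with `T C ⊆ C` and `(T - id)^2 = 0` (i.e. the spectrum of `T` is `{1}`
and all Jordan blocks have size at most `2`), then `T v ≥ v` for every `v ∈ C`,
i.e. `T - id` maps `C` into `C`. -/
theorem jordan_blocks_size_two_dominates_id
    {n : ℕ} (C : Set (Fin n → ℝ)) (hCclosed : IsClosed C)
    (hCcone : ∀ (a b : ℝ), 0 ≤ a → 0 ≤ b → ∀ x ∈ C, ∀ y ∈ C, a • x + b • y ∈ C)
    (hCpointed : ∀ x : Fin n → ℝ, x ∈ C → -x ∈ C → x = 0)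
    (T : Module.End ℝ (Fin n → ℝ)) (hTC : ∀ x ∈ C, T x ∈ C)
    (hJordan : ((T - 1) ^ 2 : Module.End ℝ (Fin n → ℝ)) = 0) :
    ∀ v ∈ C, T v - v ∈ C := by
  intro v hv
  have hN : T (T v - v) = T v - v := by
    have h := LinearMap.congr_fun hJordan v
    simp only [pow_two, Module.End.mul_apply, LinearMap.sub_apply, Module.End.one_apply,
      LinearMap.zero_apply] at h
    exact sub_eq_zero.mp h
  have hmem : ∀ k : ℕ, v + (k : ℝ) • (T v - v) ∈ C := by
    intro k
    induction k with
    | zero => simpa using hv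
    | succ k ih =>
      have h := hTC _ ih
      rw [map_add, map_smul, hN] at h
      convert h using 1
      push_cast
      module
  have hlim : Filter.Tendsto (fun k : ℕ => (1 / ((k : ℝ) + 1)) • v + (T v - v))
      Filter.atTop (nhds (T v - v)) := by
    simpa using
      ((tendsto_one_div_add_atTop_nhds_zero_nat (𝕜 := ℝ)).smul_const v).add_const (T v - v)
  refine hCclosed.mem_of_tendsto hlim (Filter.Eventually.of_forall fun k => ?_)
  have hk : (0 : ℝ) < (k : ℝ) + 1 := by positivity
  have h := hCcone (1 / ((k : ℝ) + 1)) 0 (by positivity) le_rfl _ (hmem (k + 1)) v hv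
  convert h using 1
  push_cast
  rw [smul_add, smul_smul, one_div_mul_cancel hk.ne', zero_smul, add_zero, one_smul]
end

section
/- Let H be a complex Hilbert space and let L be a bounded linear operator on H that is a 2-isometry, i.e., (L*)²L² − 2 L*L + id = 0 (equivalently, ‖L²x‖² − 2‖Lx‖² + ‖x‖² = 0 for all x ∈ H). Then ‖L x‖ ≥ ‖x‖ for every x ∈ H. -/
/-!
Pairing the defining identity with `x` gives `‖L²x‖² - 2‖Lx‖² + ‖x‖² = 0`, so along any orbit the
sequence `n ↦ ‖Lⁿx‖²` has vanishing second difference and is therefore affine: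
`‖Lⁿx‖² = ‖x‖² + n (‖Lx‖² - ‖x‖²)`. An affine sequence that stays nonnegative for all `n` has
nonnegative slope, which is the claim.
-/

open ContinuousLinearMap in
theorem two_isometry_norm_sq
    {H : Type*} [NormedAddCommGroup H] [InnerProductSpace ℂ H] [CompleteSpace H]
    (L : H →L[ℂ] H)
    (h2iso : (adjoint L) ^ 2 * L ^ 2 - 2 • (adjoint L * L) + 1 = 0) (x : H) :
    ‖L (L x)‖ ^ 2 - 2 * ‖L x‖ ^ 2 + ‖x‖ ^ 2 = 0 := by
  have h := congrArg (fun T : H →L[ℂ] H => inner ℂ (T x) x) h2iso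
  simp only [pow_two, two_smul, mul_def, one_def, add_apply, sub_apply, comp_apply, id_apply, zero_apply,
    inner_add_left, inner_sub_left, inner_zero_left, adjoint_inner_left,
    inner_self_eq_norm_sq_to_K] at h
  have h' : ((‖L (L x)‖ ^ 2 - 2 * ‖L x‖ ^ 2 + ‖x‖ ^ 2 : ℝ) : ℂ) = 0 := by
    push_cast
    rw [← h]
    simp only [Complex.coe_algebraMap]
    ring
  exact_mod_cast h'

open ContinuousLinearMap in
/-- If `L` is a `2`-isometry on a complex Hilbert space `H`,
i.e. `(L*)² L² - 2 L* L + id = 0`, then `‖L x‖ ≥ ‖x‖` for all `x ∈ H`. -/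
theorem two_isometry_expansive
    {H : Type*} [NormedAddCommGroup H] [InnerProductSpace ℂ H] [CompleteSpace H]
    (L : H →L[ℂ] H)
    (h2iso : (adjoint L) ^ 2 * L ^ 2 - 2 • (adjoint L * L) + 1 = 0) :
    ∀ x : H, ‖x‖ ≤ ‖L x‖ := by
  intro x
  have affine : ∀ (n : ℕ) (y : H),
      ‖L^[n] y‖ ^ 2 = ‖y‖ ^ 2 + n * (‖L y‖ ^ 2 - ‖y‖ ^ 2) := by
    intro n
    induction n with
    | zero => intro y; simp
    | succ k ih =>
      intro y
      rw [Function.iterate_succ_apply, ih (L y)]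
      push_cast
      linear_combination (k : ℝ) * two_isometry_norm_sq L h2iso y
  by_contra! hlt
  have hpos : 0 < ‖x‖ ^ 2 - ‖L x‖ ^ 2 :=
    sub_pos.2 (pow_lt_pow_left₀ hlt (norm_nonneg _) two_ne_zero)
  obtain ⟨n, hn⟩ := exists_nat_gt (‖x‖ ^ 2 / (‖x‖ ^ 2 - ‖L x‖ ^ 2))
  rw [div_lt_iff₀ hpos] at hn
  have := affine n x
  nlinarith [sq_nonneg ‖L^[n] x‖]
end
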